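/- Let μ be a probability measure on ℝ² (coordinates (h₁,h₂)) with h₁ > 0 and h₂ > 0 μ-almost everywhere, and fix σ² > 0 and λ₁, λ₂ > 0. Define P₁*(h₁,h₂) = (λ₁ − σ²/h₁)⁺ if λ₁h₁ ≥ λ₂h₂ and 0 otherwise, and P₂*(h₁,h₂) = (λ₂ − σ²/h₂)⁺ if λ₂h₂ > λ₁h₁ and 0 otherwise. Assume P₁* and (h₁,h₂) ↦ log(1 + P₁*h₁/(σ² + P₂*h₂)) are μ-integrable, and set P̄₁ = ∫ P₁* dμ. Then for every measurable P : ℝ² → ℝ with P ≥ 0 μ-a.e., ∫ P dμ ≤ P̄₁, and (h₁,h₂) ↦ log(1 + Ph₁/(σ² + P₂*h₂)) μ-integrable, one has ∫ log(1 + P h₁/(σ² + P₂*h₂)) dμ ≤ ∫ log(1 + P₁* h₁/(σ² + P₂*h₂)) dμ. (By symmetry the same holds with the roles of the users exchanged, so (P₁*, P₂*) is a Nash equilibrium of the water-filling game.) -/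

import Mathlib

open MeasureTheory

/-!
Water-filling maximizes the Lagrangian `log (1 + p * x / N) - p / level` in each fading state: the
tangent to the rate at the water-filling power has slope at most `1 / level`, with equality where
that power is positive. Integrating shows that it is optimal under an average power constraint, for
any profile `N` of noise plus interference.

The time-sharing policy of user 1 is exactly water-filling against the interference of user 2.
Where user 1 transmits, user 2 is silent. Elsewhere user 2 raises the noise to at least
`lam₂ * h₂ > lam₁ * h₁`; then `N / h₁` exceeds the water level `lam₁`, and water-filling
is silent too.
-/

/-- The rate, in nats, of a Gaussian channel with power `p`, gain `x` and noise plus interference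
`N`. -/
noncomputable def achievableRate (p x N : ℝ) : ℝ :=
  Real.log (1 + p * x / N)

/-- The power that water-filling with water level `level` allots to a channel with gain `x` and
noise plus interference `N`. -/
noncomputable def waterFillingPower (level x N : ℝ) : ℝ :=
  max (level - N / x) 0

/-- The time-sharing water-filling power of user 1 at gains `x` and `y` of users 1 and 2: it
water-fills against the bare noise when `lam₂ * y ≤ lam₁ * x`, ties included, and is silent
otherwise. -/
noncomputable def timeSharePower₁ (σ2 lam₁ lam₂ x y : ℝ) : ℝ :=
  if lam₂ * y ≤ lam₁ * x then waterFillingPower lam₁ x σ2 else 0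

/-- The time-sharing water-filling power of user 2 at gains `x` and `y` of users 1 and 2: it
water-fills against the bare noise in the states that `timeSharePower₁` leaves to user 2. -/
noncomputable def timeSharePower₂ (σ2 lam₁ lam₂ x y : ℝ) : ℝ :=
  if lam₁ * x < lam₂ * y then waterFillingPower lam₂ y σ2 else 0

lemma achievableRate_nonneg {p x N : ℝ} (hp : 0 ≤ p) (hx : 0 ≤ x) (hN : 0 ≤ N) :
    0 ≤ achievableRate p x N :=
  Real.log_nonneg (le_add_of_nonneg_right (by positivity))

lemma achievableRate_le_add_slope_mul {p q x N : ℝ} (hN : 0 < N) (hp : 0 < N + p * x)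
    (hq : 0 < N + q * x) :
    achievableRate p x N ≤ achievableRate q x N + x / (N + q * x) * (p - q) := by
  have rate_eq {r : ℝ} (hr : 0 < N + r * x) :
      achievableRate r x N = Real.log (N + r * x) - Real.log N := by
    rw [achievableRate, ← Real.log_div hr.ne' hN.ne', add_div, div_self hN.ne']
  have log_ratio_le : Real.log (N + p * x) - Real.log (N + q * x) ≤
      (N + p * x) / (N + q * x) - 1 := by
    rw [← Real.log_div hp.ne' hq.ne']
    exact Real.log_le_sub_one_of_pos (div_pos hp hq)
  have ratio_eq : (N + p * x) / (N + q * x) - 1 = x / (N + q * x) * (p - q) := by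
    rw [div_sub_one hq.ne']
    ring
  rw [rate_eq hp, rate_eq hq]
  linarith

lemma waterFillingPower_nonneg (level x N : ℝ) : 0 ≤ waterFillingPower level x N :=
  le_max_right _ _

lemma add_waterFillingPower_mul (level N : ℝ) {x : ℝ} (hx : 0 < x) :
    N + waterFillingPower level x N * x = max (level * x) N := by
  rw [waterFillingPower, max_mul_of_nonneg _ _ hx.le, ← max_add_add_left, sub_mul,
    div_mul_cancel₀ _ hx.ne', zero_mul, add_zero, add_sub_cancel]

lemma waterFillingPower_eq_zero {level N x : ℝ} (hx : 0 < x) (h : level * x ≤ N) :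
    waterFillingPower level x N = 0 :=
  max_eq_right (sub_nonpos.2 ((le_div_iff₀ hx).2 h))

lemma slope_waterFillingPower_mul_le {level N x p : ℝ} (hlevel : 0 < level) (hN : 0 < N)
    (hx : 0 < x) (hp : 0 ≤ p) :
    x / (N + waterFillingPower level x N * x) * (p - waterFillingPower level x N) ≤
      (p - waterFillingPower level x N) / level := by
  rcases le_total (level * x) N with hsilent | hactive
  · have slope_le : x / N ≤ 1 / level := by
      rw [div_le_div_iff₀ hN hlevel]
      linarith
    rw [waterFillingPower_eq_zero hx hsilent, zero_mul, add_zero, sub_zero, div_eq_inv_mul p,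
      ← one_div]
    exact mul_le_mul_of_nonneg_right slope_le hp
  · have slope_eq : x / (level * x) = level⁻¹ := by field_simp
    rw [add_waterFillingPower_mul level N hx, max_eq_left hactive, slope_eq, ← div_eq_inv_mul]

lemma achievableRate_le_waterFillingPower_add {level N x p : ℝ} (hlevel : 0 < level)
    (hN : 0 < N) (hx : 0 < x) (hp : 0 ≤ p) :
    achievableRate p x N ≤ achievableRate (waterFillingPower level x N) x N +
      (p - waterFillingPower level x N) / level := by
  have hq := waterFillingPower_nonneg level x N
  have tangent := achievableRate_le_add_slope_mul (p := p) (x := x)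
    (q := waterFillingPower level x N) hN (by positivity) (by positivity)
  have slope := slope_waterFillingPower_mul_le hlevel hN hx hp
  linarith

lemma timeSharePower₂_nonneg (σ2 lam₁ lam₂ x y : ℝ) :
    0 ≤ timeSharePower₂ σ2 lam₁ lam₂ x y := by
  unfold timeSharePower₂
  split_ifs
  exacts [waterFillingPower_nonneg _ _ _, le_rfl]

lemma timeSharePower₁_eq_waterFillingPower (σ2 lam₁ lam₂ : ℝ) {x y : ℝ} (hx : 0 < x)
    (hy : 0 < y) :
    timeSharePower₁ σ2 lam₁ lam₂ x y =
      waterFillingPower lam₁ x (σ2 + timeSharePower₂ σ2 lam₁ lam₂ x y * y) := by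
  rcases le_or_gt (lam₂ * y) (lam₁ * x) with hfirst | hsecond
  · rw [timeSharePower₁, timeSharePower₂, if_pos hfirst, if_neg hfirst.not_gt, zero_mul, add_zero]
  · rw [timeSharePower₁, timeSharePower₂, if_neg hsecond.not_ge, if_pos hsecond,
      add_waterFillingPower_mul lam₂ σ2 hy,
      waterFillingPower_eq_zero hx (hsecond.le.trans (le_max_left _ _))]

section AverageRate

variable {Ω : Type*} [MeasurableSpace Ω] {μ : Measure Ω}

lemma aemeasurable_timeSharePower₂ (σ2 lam₁ lam₂ : ℝ) {x y : Ω → ℝ} (hx : AEMeasurable x μ)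
    (hy : AEMeasurable y μ) :
    AEMeasurable (fun ω => timeSharePower₂ σ2 lam₁ lam₂ (x ω) (y ω)) μ := by
  have hmeas : Measurable fun z : ℝ × ℝ => timeSharePower₂ σ2 lam₁ lam₂ z.1 z.2 := by
    unfold timeSharePower₂ waterFillingPower
    exact Measurable.ite (measurableSet_lt (by fun_prop) (by fun_prop)) (by fun_prop)
      measurable_const
  exact hmeas.comp_aemeasurable (hx.prodMk hy)

lemma ae_achievableRate_le_add {level : ℝ} (hlevel : 0 < level) {x N P Q : Ω → ℝ}
    (hx : ∀ᵐ ω ∂μ, 0 < x ω) (hN : ∀ᵐ ω ∂μ, 0 < N ω)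
    (hQ : ∀ᵐ ω ∂μ, Q ω = waterFillingPower level (x ω) (N ω)) (hP : ∀ᵐ ω ∂μ, 0 ≤ P ω) :
    ∀ᵐ ω ∂μ, achievableRate (P ω) (x ω) (N ω) ≤
      achievableRate (Q ω) (x ω) (N ω) + (P ω - Q ω) / level := by
  filter_upwards [hx, hN, hQ, hP] with ω hxω hNω hQω hPω
  rw [hQω]
  exact achievableRate_le_waterFillingPower_add hlevel hNω hxω hPω

lemma integrable_achievableRate_of_waterFillingPower {level : ℝ} (hlevel : 0 < level)
    {x N P Q : Ω → ℝ} (hxmeas : AEMeasurable x μ) (hNmeas : AEMeasurable N μ)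
    (hx : ∀ᵐ ω ∂μ, 0 < x ω) (hN : ∀ᵐ ω ∂μ, 0 < N ω)
    (hQ : ∀ᵐ ω ∂μ, Q ω = waterFillingPower level (x ω) (N ω)) (hQint : Integrable Q μ)
    (hQrate : Integrable (fun ω => achievableRate (Q ω) (x ω) (N ω)) μ)
    (hP : ∀ᵐ ω ∂μ, 0 ≤ P ω) (hPint : Integrable P μ) :
    Integrable (fun ω => achievableRate (P ω) (x ω) (N ω)) μ := by
  have hmeas : AEMeasurable (fun ω => achievableRate (P ω) (x ω) (N ω)) μ :=
    (((hPint.aemeasurable.mul hxmeas).div hNmeas).const_add 1).log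
  refine (hQrate.add ((hPint.sub hQint).div_const level)).mono' hmeas.aestronglyMeasurable ?_
  filter_upwards [hx, hN, hP, ae_achievableRate_le_add hlevel hx hN hQ hP]
    with ω hxω hNω hPω hbound
  rwa [Real.norm_of_nonneg (achievableRate_nonneg hPω hxω.le hNω.le)]

lemma integral_achievableRate_le_of_waterFillingPower {level : ℝ} (hlevel : 0 < level)
    {x N P Q : Ω → ℝ} (hx : ∀ᵐ ω ∂μ, 0 < x ω) (hN : ∀ᵐ ω ∂μ, 0 < N ω)
    (hQ : ∀ᵐ ω ∂μ, Q ω = waterFillingPower level (x ω) (N ω)) (hQint : Integrable Q μ)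
    (hQrate : Integrable (fun ω => achievableRate (Q ω) (x ω) (N ω)) μ)
    (hP : ∀ᵐ ω ∂μ, 0 ≤ P ω) (hPint : Integrable P μ)
    (hPrate : Integrable (fun ω => achievableRate (P ω) (x ω) (N ω)) μ)
    (hPQ : ∫ ω, P ω ∂μ ≤ ∫ ω, Q ω ∂μ) :
    ∫ ω, achievableRate (P ω) (x ω) (N ω) ∂μ ≤ ∫ ω, achievableRate (Q ω) (x ω) (N ω) ∂μ := by
  have hcost : Integrable (fun ω => (P ω - Q ω) / level) μ := (hPint.sub hQint).div_const level
  calc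
    ∫ ω, achievableRate (P ω) (x ω) (N ω) ∂μ
      ≤ ∫ ω, achievableRate (Q ω) (x ω) (N ω) + (P ω - Q ω) / level ∂μ :=
        integral_mono_ae hPrate (hQrate.add hcost) (ae_achievableRate_le_add hlevel hx hN hQ hP)
    _ = ∫ ω, achievableRate (Q ω) (x ω) (N ω) ∂μ + (∫ ω, P ω ∂μ - ∫ ω, Q ω ∂μ) / level := by
        rw [integral_add hQrate hcost, integral_div, integral_sub hPint hQint]
    _ ≤ ∫ ω, achievableRate (Q ω) (x ω) (N ω) ∂μ :=
        add_le_of_nonpos_right (div_nonpos_of_nonpos_of_nonneg (sub_nonpos.2 hPQ) hlevel.le)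

theorem stmt_7_general {h₁ h₂ P : Ω → ℝ} (hh₁ : AEMeasurable h₁ μ) (hh₂ : AEMeasurable h₂ μ)
    (hpos : ∀ᵐ ω ∂μ, 0 < h₁ ω ∧ 0 < h₂ ω) {σ2 lam₁ lam₂ : ℝ} (hσ : 0 < σ2) (hlam₁ : 0 < lam₁)
    (hP₁int : Integrable (fun ω => timeSharePower₁ σ2 lam₁ lam₂ (h₁ ω) (h₂ ω)) μ)
    (hR₁int : Integrable (fun ω => achievableRate (timeSharePower₁ σ2 lam₁ lam₂ (h₁ ω) (h₂ ω))
      (h₁ ω) (σ2 + timeSharePower₂ σ2 lam₁ lam₂ (h₁ ω) (h₂ ω) * h₂ ω)) μ)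
    (hP : ∀ᵐ ω ∂μ, 0 ≤ P ω) (hPint : Integrable P μ)
    (hPle : ∫ ω, P ω ∂μ ≤ ∫ ω, timeSharePower₁ σ2 lam₁ lam₂ (h₁ ω) (h₂ ω) ∂μ) :
    Integrable (fun ω => achievableRate (P ω) (h₁ ω)
        (σ2 + timeSharePower₂ σ2 lam₁ lam₂ (h₁ ω) (h₂ ω) * h₂ ω)) μ ∧
      ∫ ω, achievableRate (P ω) (h₁ ω)
          (σ2 + timeSharePower₂ σ2 lam₁ lam₂ (h₁ ω) (h₂ ω) * h₂ ω) ∂μ ≤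
        ∫ ω, achievableRate (timeSharePower₁ σ2 lam₁ lam₂ (h₁ ω) (h₂ ω)) (h₁ ω)
          (σ2 + timeSharePower₂ σ2 lam₁ lam₂ (h₁ ω) (h₂ ω) * h₂ ω) ∂μ := by
  have hNmeas : AEMeasurable
      (fun ω => σ2 + timeSharePower₂ σ2 lam₁ lam₂ (h₁ ω) (h₂ ω) * h₂ ω) μ :=
    ((aemeasurable_timeSharePower₂ σ2 lam₁ lam₂ hh₁ hh₂).mul hh₂).const_add σ2
  have hNpos : ∀ᵐ ω ∂μ, 0 < σ2 + timeSharePower₂ σ2 lam₁ lam₂ (h₁ ω) (h₂ ω) * h₂ ω :=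
    hpos.mono fun ω hω =>
      add_pos_of_pos_of_nonneg hσ (mul_nonneg (timeSharePower₂_nonneg _ _ _ _ _) hω.2.le)
  have hbest : ∀ᵐ ω ∂μ, timeSharePower₁ σ2 lam₁ lam₂ (h₁ ω) (h₂ ω) = waterFillingPower lam₁
      (h₁ ω) (σ2 + timeSharePower₂ σ2 lam₁ lam₂ (h₁ ω) (h₂ ω) * h₂ ω) :=
    hpos.mono fun ω hω => timeSharePower₁_eq_waterFillingPower σ2 lam₁ lam₂ hω.1 hω.2
  have hh₁pos : ∀ᵐ ω ∂μ, 0 < h₁ ω := hpos.mono fun _ hω => hω.1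
  have hrate := integrable_achievableRate_of_waterFillingPower hlam₁ hh₁ hNmeas hh₁pos hNpos hbest
    hP₁int hR₁int hP hPint
  exact ⟨hrate, integral_achievableRate_le_of_waterFillingPower hlam₁ hh₁pos hNpos hbest hP₁int
    hR₁int hP hPint hrate hPle⟩

end AverageRate

/-- The time-sharing water-filling policy of user 1 maximizes its average rate
(treating user 2's time-sharing water-filling signal as noise) subject to its
average power constraint; hence the time-sharing pair is a Nash equilibrium of
the water-filling game. -/
theorem stmt_7 (μ : Measure (ℝ × ℝ)) [IsProbabilityMeasure μ]
    (hpos : ∀ᵐ h ∂μ, 0 < h.1 ∧ 0 < h.2)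
    (σ2 lam₁ lam₂ : ℝ) (hσ : 0 < σ2) (hlam₁ : 0 < lam₁) (hlam₂ : 0 < lam₂)
    (P₁star P₂star : ℝ × ℝ → ℝ)
    (hP₁star : P₁star = fun h =>
      if lam₂ * h.2 ≤ lam₁ * h.1 then max (lam₁ - σ2 / h.1) 0 else 0)
    (hP₂star : P₂star = fun h =>
      if lam₁ * h.1 < lam₂ * h.2 then max (lam₂ - σ2 / h.2) 0 else 0)
    (hP₁Int : Integrable P₁star μ)
    (hR₁Int : Integrable
      (fun h => Real.log (1 + P₁star h * h.1 / (σ2 + P₂star h * h.2))) μ)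
    (Pbar₁ : ℝ) (hPbar₁ : Pbar₁ = ∫ h, P₁star h ∂μ) :
    ∀ P : ℝ × ℝ → ℝ, Measurable P → (∀ᵐ h ∂μ, 0 ≤ P h) →
      Integrable P μ → (∫ h, P h ∂μ) ≤ Pbar₁ →
      Integrable (fun h => Real.log (1 + P h * h.1 / (σ2 + P₂star h * h.2))) μ →
      (∫ h, Real.log (1 + P h * h.1 / (σ2 + P₂star h * h.2)) ∂μ) ≤
        ∫ h, Real.log (1 + P₁star h * h.1 / (σ2 + P₂star h * h.2)) ∂μ := by
  subst hP₁star hP₂star hPbar₁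
  exact fun P _ hP hPInt hPle _ => (stmt_7_general measurable_fst.aemeasurable
    measurable_snd.aemeasurable hpos hσ hlam₁ hP₁Int hR₁Int hP hPInt hPle).2
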